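/- Assume the loss has the form ℓ(w,x,y) = ℓ(f_w(x),y) with values in [0,1]. Then the standard expected generalization error gen = E[(1/n) Σ_{i=1}^n (ℓ(W,Z_i^{−U_i}) − ℓ(W,Z_i^{U_i}))] satisfies |gen| ≤ E_{Y'~P_Y}[E_{Z_{[2n]}}[(1/n^{Y'}) Σ_{i=1}^n sqrt(2·I_{Z_{[2n]}}(Δ_{Y'}L_i;U_i))]]. -/

import Mathlib

open MeasureTheory ProbabilityTheory
open scoped ENNReal

noncomputable section

open Classical in
/-- Kullback–Leibler divergence: `∞` unless `μ ≪ ν` and the log-likelihood ratio is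
`μ`-integrable. -/
def KL {α : Type*} [MeasurableSpace α] (μ ν : Measure α) : ℝ≥0∞ :=
  if μ ≪ ν ∧ Integrable (llr μ ν) μ then ENNReal.ofReal (∫ x, llr μ ν x ∂μ) else ∞

/-- Fair coin measure on `Bool` (the law of a uniform `{−1,+1}` selector, `true ↔ +1`). -/
def coin : Measure Bool :=
  (2 : ℝ≥0∞)⁻¹ • Measure.dirac true + (2 : ℝ≥0∞)⁻¹ • Measure.dirac false

/-- Disintegrated conditional mutual information `I_z(A;B)` given `Z = z`, defined through
regular conditional distributions: `KL(P_{A,B|Z=z} ‖ P_{A|Z=z} ⊗ P_{B|Z=z})`. -/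
def dCMI {Ω γ α β : Type*} [MeasurableSpace Ω] [MeasurableSpace γ]
    [MeasurableSpace α] [StandardBorelSpace α] [Nonempty α]
    [MeasurableSpace β] [StandardBorelSpace β] [Nonempty β]
    (μ : Measure Ω) [IsFiniteMeasure μ]
    (A : Ω → α) (B : Ω → β) (Z : Ω → γ) (z : γ) : ℝ≥0∞ :=
  KL (condDistrib (fun ω => (A ω, B ω)) Z μ z)
    ((condDistrib A Z μ z).prod (condDistrib B Z μ z))

/-- The super-sample entry selected by `u`, i.e. `z^{u}` (the training sample):
`zz = (z⁻, z⁺)` and `u = true` means `+1`. -/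
def trainSel {𝒵 : Type*} (zz : 𝒵 × 𝒵) (u : Bool) : 𝒵 := if u then zz.2 else zz.1

/-- The super-sample entry not selected by `u`, i.e. `z^{−u}` (the test sample). -/
def testSel {𝒵 : Type*} (zz : 𝒵 × 𝒵) (u : Bool) : 𝒵 := if u then zz.1 else zz.2

/-! Condition on the super-sample `Z = z`. The selector `U_i` is independent of `Z`, so under the
product of the conditional laws of `Δ_yL_i` and `U_i` the variable `U_i · Δ_yL_i` has mean zero, and
it lies in `[-1, 1]`, hence is sub-Gaussian by Hoeffding's lemma. The Donsker–Varadhan inequality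
turns this into `|E[U_i · Δ_yL_i | Z = z]| ≤ √(2 I_z(Δ_yL_i; U_i))`. Integrating over `z` and
averaging over `i` bounds the label-wise errors `gen_y = (1 / n^y) ∑ i, E[U_i · Δ_yL_i]`. The loss
of a sample is the sum over `y` of its restrictions to the label `y`, so that
`gen = ∑ y, P(Y = y) gen_y`. -/

section Transport

variable {α : Type*} [MeasurableSpace α] {ν ρ : Measure α} [IsProbabilityMeasure ν]
  [IsProbabilityMeasure ρ] {g : α → ℝ}

theorem integral_le_integral_llr_add_log_integral_exp (hνρ : ν ≪ ρ)
    (hllr : Integrable (llr ν ρ) ν) (hg : Integrable g ν)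
    (hexp : Integrable (fun x => Real.exp (g x)) ρ) :
    ∫ x, g x ∂ν ≤ ∫ x, llr ν ρ x ∂ν + Real.log (∫ x, Real.exp (g x) ∂ρ) := by
  have := isProbabilityMeasure_tilted hexp
  -- Gibbs' inequality for `ν` against the tilted measure `ρ.tilted g`.
  have gibbs := InformationTheory.integral_llr_add_sub_measure_univ_nonneg
    (hνρ.trans (absolutelyContinuous_tilted hexp))
    (integrable_llr_tilted_right hνρ hg hllr hexp)
  rw [integral_llr_tilted_right hνρ hg hexp hllr] at gibbs
  simp only [probReal_univ] at gibbs
  linarith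

theorem sq_integral_le_two_mul_integral_llr {c : NNReal} (hg : HasSubgaussianMGF g c ρ)
    (hνρ : ν ≪ ρ) (hllr : Integrable (llr ν ρ) ν) (hgν : Integrable g ν) :
    (∫ x, g x ∂ν) ^ 2 ≤ 2 * c * ∫ x, llr ν ρ x ∂ν := by
  have quadratic_nonneg (t : ℝ) :
      0 ≤ (c / 2 : ℝ) * (t * t) + (-∫ x, g x ∂ν) * t + ∫ x, llr ν ρ x ∂ν := by
    have variational := integral_le_integral_llr_add_log_integral_exp hνρ hllr
      (hgν.const_mul t) (hg.integrable_exp_mul t)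
    have log_mgf_le : Real.log (∫ x, Real.exp (t * g x) ∂ρ) ≤ c * t ^ 2 / 2 := hg.cgf_le t
    rw [integral_const_mul] at variational
    linarith
  have discrim_nonpos := discrim_le_zero quadratic_nonneg
  rw [discrim] at discrim_nonpos
  linarith

theorem enorm_integral_sub_integral_le_KL {a b : ℝ} (hab : a < b) (hg : AEMeasurable g ρ)
    (hgab : ∀ᵐ x ∂ρ, g x ∈ Set.Icc a b) :
    ‖∫ x, g x ∂ν - ∫ x, g x ∂ρ‖ₑ ≤
      (ENNReal.ofReal ((b - a) ^ 2 / 2) * KL ν ρ) ^ (1 / 2 : ℝ) := by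
  have variance_pos : 0 < (b - a) ^ 2 / 2 := by have := sub_pos.2 hab; positivity
  unfold KL
  split_ifs with h
  swap
  · simp [ENNReal.mul_top, variance_pos]
  obtain ⟨hνρ, hllr⟩ := h
  have hgν : Integrable g ν := .of_mem_Icc a b (hg.mono_ac hνρ) (hνρ.ae_le hgab)
  have transport := sq_integral_le_two_mul_integral_llr (hasSubgaussianMGF_of_mem_Icc hg hgab)
    hνρ hllr (hgν.sub (integrable_const _))
  have scale : 2 * (((‖b - a‖₊ / 2) ^ 2 : NNReal) : ℝ) = (b - a) ^ 2 / 2 := by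
    push_cast
    rw [div_pow, Real.norm_eq_abs, sq_abs]
    ring
  rw [scale, integral_sub hgν (integrable_const _), integral_const, probReal_univ, one_smul]
    at transport
  rw [← ENNReal.ofReal_mul variance_pos.le,
    ENNReal.ofReal_rpow_of_nonneg ((sq_nonneg _).trans transport) (by norm_num),
    ← Real.sqrt_eq_rpow, Real.enorm_eq_ofReal_abs]
  exact ENNReal.ofReal_le_ofReal (Real.abs_le_sqrt transport)

end Transport

lemma sum_lintegral_le_lintegral_sum {α ι : Type*} [MeasurableSpace α] (μ : Measure α)
    (s : Finset ι) (f : ι → α → ℝ≥0∞) :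
    ∑ i ∈ s, ∫⁻ x, f i x ∂μ ≤ ∫⁻ x, ∑ i ∈ s, f i x ∂μ := by
  classical
  induction s using Finset.induction_on with
  | empty => simp
  | insert i s hi ih =>
    simp only [Finset.sum_insert hi]
    exact (add_le_add_right ih _).trans (le_lintegral_add _ _)

lemma hasSum_setIntegral_preimage_singleton {Ω ι E : Type*} [MeasurableSpace Ω]
    [MeasurableSpace ι] [Countable ι] [MeasurableSingletonClass ι] [NormedAddCommGroup E]
    [NormedSpace ℝ E] {μ : Measure Ω} {Y : Ω → ι} {g : Ω → E} (hY : Measurable Y)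
    (hg : Integrable g μ) :
    HasSum (fun y => ∫ ω in Y ⁻¹' {y}, g ω ∂μ) (∫ ω, g ω ∂μ) := by
  have cover : ⋃ y, Y ⁻¹' {y} = Set.univ := by
    rw [← Set.preimage_iUnion, Set.iUnion_of_singleton, Set.preimage_univ]
  rw [← setIntegral_univ, ← cover]
  exact hasSum_integral_iUnion (fun y => hY (measurableSet_singleton y))
    (fun _ _ h => (Set.disjoint_singleton.2 h).preimage Y) hg.integrableOn

section CondDistrib

variable {Ω γ α : Type*} [MeasurableSpace Ω] [MeasurableSpace γ] [MeasurableSpace α]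
  [StandardBorelSpace α] [Nonempty α] {μ : Measure Ω} [IsFiniteMeasure μ] {Z : Ω → γ} {X : Ω → α}

lemma ae_ae_condDistrib {p : α → Prop} (hZ : AEMeasurable Z μ) (hX : AEMeasurable X μ)
    (hp : MeasurableSet {x | p x}) (h : ∀ᵐ ω ∂μ, p (X ω)) :
    ∀ᵐ z ∂μ.map Z, ∀ᵐ x ∂condDistrib X Z μ z, p x := by
  apply Measure.ae_ae_of_ae_comp
  rwa [condDistrib_comp_map hZ hX, ae_map_iff hX hp]

lemma integral_integral_condDistrib {E : Type*} [NormedAddCommGroup E] [NormedSpace ℝ E]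
    {g : α → E} (hZ : AEMeasurable Z μ) (hX : AEMeasurable X μ) (hg : Integrable g (μ.map X)) :
    ∫ z, ∫ x, g x ∂condDistrib X Z μ z ∂μ.map Z = ∫ ω, g (X ω) ∂μ := by
  rw [← integral_map hX hg.1]
  rw [← condDistrib_comp_map hZ hX, Measure.comp_eq_comp_const_apply] at hg ⊢
  rw [Kernel.integral_comp hg, Kernel.const_apply]

lemma condDistrib_ae_eq_const_of_indepFun (hZ : AEMeasurable Z μ) (hX : AEMeasurable X μ)
    (h : IndepFun Z X μ) : condDistrib X Z μ =ᵐ[μ.map Z] Kernel.const γ (μ.map X) := by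
  apply condDistrib_ae_eq_of_measure_eq_compProd _ hX
  rw [h.map_prod_eq_prod_map_map hZ hX, Measure.compProd_const]

end CondDistrib

instance : IsProbabilityMeasure coin where
  measure_univ := by simp [coin, ENNReal.inv_two_add_inv_two]

/-- The selector `u : Bool` read as the sign `±1` of the paper, `true ↔ +1`. -/
def selectorSign (u : Bool) : ℝ := if u then 1 else -1

@[fun_prop]
lemma measurable_selectorSign : Measurable selectorSign := measurable_of_finite _

@[simp]
lemma abs_selectorSign (u : Bool) : |selectorSign u| = 1 := by
  cases u <;> simp [selectorSign]

lemma integral_selectorSign : ∫ u, selectorSign u ∂coin = 0 := by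
  unfold coin
  rw [integral_add_measure ((integrable_dirac enorm_lt_top).smul_measure (by simp))
    ((integrable_dirac enorm_lt_top).smul_measure (by simp))]
  simp [selectorSign]

lemma integrable_selectorSign_mul {Ω : Type*} [MeasurableSpace Ω] {μ : Measure Ω} {A : Ω → ℝ}
    {B : Ω → Bool} (hA : Integrable A μ) (hB : AEMeasurable B μ) :
    Integrable (fun ω => selectorSign (B ω) * A ω) μ :=
  hA.bdd_mul (measurable_selectorSign.comp_aemeasurable hB).aestronglyMeasurable
    (ae_of_all _ fun ω => (abs_selectorSign (B ω)).le)

lemma apply_testSel_sub_apply_trainSel {𝒵 : Type*} (φ : 𝒵 → ℝ) (zz : 𝒵 × 𝒵) (u : Bool) :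
    φ (testSel zz u) - φ (trainSel zz u) = selectorSign u * (φ zz.1 - φ zz.2) := by
  cases u <;> simp [testSel, trainSel, selectorSign]

theorem enorm_integral_selectorSign_mul_le_KL {ν : Measure (ℝ × Bool)} [IsProbabilityMeasure ν]
    {κ : Measure ℝ} [IsProbabilityMeasure κ] (hκ : ∀ᵐ a ∂κ, |a| ≤ 1) :
    ‖∫ x, selectorSign x.2 * x.1 ∂ν‖ₑ ≤ (2 * KL ν (κ.prod coin)) ^ (1 / 2 : ℝ) := by
  have mem_Icc : ∀ᵐ x ∂κ.prod coin, selectorSign x.2 * x.1 ∈ Set.Icc (-1) 1 := by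
    filter_upwards [Measure.quasiMeasurePreserving_fst.ae hκ] with x hx
    rwa [Set.mem_Icc, ← abs_le, abs_mul, abs_selectorSign, one_mul]
  have mean_zero : ∫ x, selectorSign x.2 * x.1 ∂κ.prod coin = 0 := by
    simp_rw [mul_comm]
    rw [integral_prod_mul (fun a : ℝ => a) selectorSign, integral_selectorSign, mul_zero]
  have bound := enorm_integral_sub_integral_le_KL (ν := ν) (by norm_num)
    (by fun_prop : AEMeasurable (fun x => selectorSign x.2 * x.1) (κ.prod coin)) mem_Icc
  rw [mean_zero, sub_zero] at bound
  convert bound using 3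
  norm_num

theorem enorm_integral_selectorSign_mul_le_lintegral_dCMI {Ω γ : Type*} [MeasurableSpace Ω]
    [MeasurableSpace γ] {μ : Measure Ω} [IsProbabilityMeasure μ] {Z : Ω → γ} {A : Ω → ℝ}
    {B : Ω → Bool} (hZ : AEMeasurable Z μ) (hA : AEMeasurable A μ)
    (hA_bound : ∀ᵐ ω ∂μ, |A ω| ≤ 1) (hB : HasLaw B coin μ) (hZB : IndepFun Z B μ) :
    ‖∫ ω, selectorSign (B ω) * A ω ∂μ‖ₑ ≤
      ∫⁻ z, (2 * dCMI μ A B Z z) ^ (1 / 2 : ℝ) ∂μ.map Z := by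
  let g : ℝ × Bool → ℝ := fun x => selectorSign x.2 * x.1
  have hg : Measurable g := by fun_prop
  have hAB : AEMeasurable (fun ω => (A ω, B ω)) μ := hA.prodMk hB.aemeasurable
  have hg_int : Integrable g (μ.map fun ω => (A ω, B ω)) :=
    (integrable_map_measure hg.aestronglyMeasurable hAB).2 <|
      integrable_selectorSign_mul (.of_bound hA.aestronglyMeasurable 1 hA_bound) hB.aemeasurable
  have cond_bound : ∀ᵐ z ∂μ.map Z, ‖∫ x, g x ∂condDistrib (fun ω => (A ω, B ω)) Z μ z‖ₑ ≤
      (2 * dCMI μ A B Z z) ^ (1 / 2 : ℝ) := by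
    have hA_cond := ae_ae_condDistrib hZ hA (p := fun a => |a| ≤ 1)
      (measurableSet_le measurable_norm measurable_const) hA_bound
    filter_upwards [condDistrib_ae_eq_const_of_indepFun hZ hB.aemeasurable hZB, hA_cond]
      with z hBz hAz
    rw [dCMI, hBz, Kernel.const_apply, hB.map_eq]
    exact enorm_integral_selectorSign_mul_le_KL hAz
  calc ‖∫ ω, selectorSign (B ω) * A ω ∂μ‖ₑ
      = ‖∫ z, ∫ x, g x ∂condDistrib (fun ω => (A ω, B ω)) Z μ z ∂μ.map Z‖ₑ := by
        rw [integral_integral_condDistrib hZ hAB hg_int]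
    _ ≤ ∫⁻ z, ‖∫ x, g x ∂condDistrib (fun ω => (A ω, B ω)) Z μ z‖ₑ ∂μ.map Z :=
        enorm_integral_le_lintegral_enorm _
    _ ≤ _ := lintegral_mono_ae cond_bound

section LabelDecomposition

variable {Ω 𝒲 𝒵 𝒴 : Type*} [DecidableEq 𝒴] {T : 𝒵 → 𝒴} {L : 𝒲 → 𝒵 → ℝ}

/-- The paper's `Δ_yL` for the label map `T` and the loss `L`, as a function of the weights `w`
and of one super-sample entry `zz = (z⁻, z⁺)`. -/
def labelLossDiff (T : 𝒵 → 𝒴) (L : 𝒲 → 𝒵 → ℝ) (y : 𝒴) (w : 𝒲) (zz : 𝒵 × 𝒵) : ℝ :=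
  (if T zz.1 = y then L w zz.1 else 0) - (if T zz.2 = y then L w zz.2 else 0)

lemma abs_labelLossDiff_le_one (hL01 : ∀ w z, L w z ∈ Set.Icc (0 : ℝ) 1) (y : 𝒴) (w : 𝒲)
    (zz : 𝒵 × 𝒵) : |labelLossDiff T L y w zz| ≤ 1 := by
  have ⟨h₁, h₁'⟩ := hL01 w zz.1
  have ⟨h₂, h₂'⟩ := hL01 w zz.2
  rw [labelLossDiff, abs_le]
  split_ifs <;> constructor <;> linarith

variable [MeasurableSpace Ω] [MeasurableSpace 𝒵]

/-- The generalization error `gen_y` restricted to the label `y`, normalized by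
`n^y = n · P(Y = y)`. The test-minus-training loss on the `i`-th entry is written in its symmetrized
form `U_i · Δ_yL_i`; the value is `0` on a label of probability `0`. -/
def labelGenError {n : ℕ} (μ : Measure Ω) (P : Measure 𝒵) (T : 𝒵 → 𝒴) (L : 𝒲 → 𝒵 → ℝ)
    (W : Ω → 𝒲) (Z : Ω → Fin n → 𝒵 × 𝒵) (U : Ω → Fin n → Bool) (y : 𝒴) : ℝ :=
  1 / (n * P.real (T ⁻¹' {y})) *
    ∑ i, ∫ ω, selectorSign (U ω i) * labelLossDiff T L y (W ω) (Z ω i) ∂μ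

variable [MeasurableSpace 𝒴] [MeasurableSingletonClass 𝒴] {μ : Measure Ω} {P : Measure 𝒵}
  {W : Ω → 𝒲}

lemma labelLossDiff_ae_eq_zero_of_measure_eq_zero {ζ : Ω → 𝒵 × 𝒵}
    (h₁ : HasLaw (fun ω => (ζ ω).1) P μ) (h₂ : HasLaw (fun ω => (ζ ω).2) P μ)
    (hT : Measurable T) {y : 𝒴} (hy : P (T ⁻¹' {y}) = 0) :
    ∀ᵐ ω ∂μ, labelLossDiff T L y (W ω) (ζ ω) = 0 := by
  have label_ne {X : Ω → 𝒵} (hX : HasLaw X P μ) : ∀ᵐ ω ∂μ, T (X ω) ≠ y := by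
    have measurableSet_label : MeasurableSet (T ⁻¹' {y}) := hT (measurableSet_singleton y)
    simpa [ae_iff] using (hX.measure_eq measurableSet_label).trans hy
  filter_upwards [label_ne h₁, label_ne h₂] with ω hω₁ hω₂
  simp [labelLossDiff, hω₁, hω₂]

variable [MeasurableSpace 𝒲]

lemma measurable_labelLossDiff (hT : Measurable T) (hL : Measurable (Function.uncurry L)) (y : 𝒴) :
    Measurable fun p : 𝒲 × 𝒵 × 𝒵 => labelLossDiff T L y p.1 p.2 := by
  have measurableSet_label : MeasurableSet (T ⁻¹' {y}) := hT (measurableSet_singleton y)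
  have measurable_branch {π : 𝒵 × 𝒵 → 𝒵} (hπ : Measurable π) :
      Measurable fun p : 𝒲 × 𝒵 × 𝒵 => if T (π p.2) = y then L p.1 (π p.2) else 0 :=
    .ite (hπ.comp measurable_snd measurableSet_label)
      (hL.comp (measurable_fst.prodMk (hπ.comp measurable_snd))) measurable_const
  exact (measurable_branch measurable_fst).sub (measurable_branch measurable_snd)

lemma integrable_loss [IsFiniteMeasure μ] {X : Ω → 𝒵} (hX : Measurable X) (hW : Measurable W)
    (hL : Measurable (Function.uncurry L)) (hL01 : ∀ w z, L w z ∈ Set.Icc (0 : ℝ) 1) :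
    Integrable (fun ω => L (W ω) (X ω)) μ :=
  .of_mem_Icc 0 1 (hL.comp (hW.prodMk hX)).aemeasurable (ae_of_all _ fun ω => hL01 (W ω) (X ω))

lemma hasSum_integral_selectorSign_mul_labelLossDiff [Countable 𝒴] [IsFiniteMeasure μ]
    {ζ : Ω → 𝒵 × 𝒵} {B : Ω → Bool} (hζ : Measurable ζ) (hB : AEMeasurable B μ)
    (hW : Measurable W) (hT : Measurable T) (hL : Measurable (Function.uncurry L))
    (hL01 : ∀ w z, L w z ∈ Set.Icc (0 : ℝ) 1) :
    HasSum (fun y => ∫ ω, selectorSign (B ω) * labelLossDiff T L y (W ω) (ζ ω) ∂μ)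
      (∫ ω, selectorSign (B ω) * (L (W ω) (ζ ω).1 - L (W ω) (ζ ω).2) ∂μ) := by
  have fst_int := integrable_selectorSign_mul (integrable_loss hζ.fst hW hL hL01) hB
  have snd_int := integrable_selectorSign_mul (integrable_loss hζ.snd hW hL hL01) hB
  have fst_label : Measurable fun ω => T (ζ ω).1 := hT.comp hζ.fst
  have snd_label : Measurable fun ω => T (ζ ω).2 := hT.comp hζ.snd
  convert! (hasSum_setIntegral_preimage_singleton fst_label fst_int).sub
    (hasSum_setIntegral_preimage_singleton snd_label snd_int) using 1
  · ext y
    have fst_fiber := fst_label (measurableSet_singleton y)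
    have snd_fiber := snd_label (measurableSet_singleton y)
    rw [← integral_indicator fst_fiber, ← integral_indicator snd_fiber,
      ← integral_sub (fst_int.indicator fst_fiber) (snd_int.indicator snd_fiber)]
    congr! 2 with ω
    by_cases h₁ : T (ζ ω).1 = y <;> by_cases h₂ : T (ζ ω).2 = y <;>
      simp [labelLossDiff, mul_sub, h₁, h₂]
  · simp_rw [mul_sub]
    exact integral_sub fst_int snd_int

variable {n : ℕ} {Z : Ω → Fin n → 𝒵 × 𝒵} {U : Ω → Fin n → Bool}

theorem enorm_labelGenError_le [IsProbabilityMeasure μ] (hZ : Measurable Z) (hW : Measurable W)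
    (hU : ∀ i, HasLaw (fun ω => U ω i) coin μ) (hZU : ∀ i, IndepFun Z (fun ω => U ω i) μ)
    (hT : Measurable T) (hL : Measurable (Function.uncurry L))
    (hL01 : ∀ w z, L w z ∈ Set.Icc (0 : ℝ) 1) (y : 𝒴) :
    ‖labelGenError μ P T L W Z U y‖ₑ ≤
      ∫⁻ z, ENNReal.ofReal (1 / (n * P.real (T ⁻¹' {y}))) *
        ∑ i, (2 * dCMI μ (fun ω => labelLossDiff T L y (W ω) (Z ω i)) (fun ω => U ω i) Z z) ^
          (1 / 2 : ℝ) ∂μ.map Z := by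
  have entry_bound (i : Fin n) := enorm_integral_selectorSign_mul_le_lintegral_dCMI
    hZ.aemeasurable (((measurable_labelLossDiff hT hL y).comp
      (hW.prodMk ((measurable_pi_apply i).comp hZ))).aemeasurable)
    (ae_of_all _ fun ω => abs_labelLossDiff_le_one hL01 y (W ω) (Z ω i)) (hU i) (hZU i)
  rw [labelGenError, enorm_mul, Real.enorm_of_nonneg (by positivity),
    lintegral_const_mul' _ _ ENNReal.ofReal_ne_top]
  gcongr
  calc ‖∑ i, ∫ ω, selectorSign (U ω i) * labelLossDiff T L y (W ω) (Z ω i) ∂μ‖ₑ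
      ≤ ∑ i, ‖∫ ω, selectorSign (U ω i) * labelLossDiff T L y (W ω) (Z ω i) ∂μ‖ₑ :=
        enorm_sum_le _ _
    _ ≤ _ := Finset.sum_le_sum fun i _ => entry_bound i
    _ ≤ _ := sum_lintegral_le_lintegral_sum _ _ _

theorem hasSum_mul_labelGenError [Countable 𝒴] [IsFiniteMeasure μ] [IsFiniteMeasure P]
    (hZ : Measurable Z) (hU : ∀ i, AEMeasurable (fun ω => U ω i) μ) (hW : Measurable W)
    (hZ₁ : ∀ i, HasLaw (fun ω => (Z ω i).1) P μ) (hZ₂ : ∀ i, HasLaw (fun ω => (Z ω i).2) P μ)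
    (hT : Measurable T) (hL : Measurable (Function.uncurry L))
    (hL01 : ∀ w z, L w z ∈ Set.Icc (0 : ℝ) 1) :
    HasSum (fun y => P.real (T ⁻¹' {y}) * labelGenError μ P T L W Z U y)
      (∫ ω, 1 / n * ∑ i, (L (W ω) (testSel (Z ω i) (U ω i)) -
        L (W ω) (trainSel (Z ω i) (U ω i))) ∂μ) := by
  have entry_sum (i : Fin n) := hasSum_integral_selectorSign_mul_labelLossDiff
    ((measurable_pi_apply i).comp hZ) (hU i) hW hT hL hL01
  convert! (hasSum_sum fun i (_ : i ∈ Finset.univ) => entry_sum i).mul_left (1 / n : ℝ) using 1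
  · ext y
    by_cases hy : P.real (T ⁻¹' {y}) = 0
    · have entry_zero (i : Fin n) :
          ∫ ω, selectorSign (U ω i) * labelLossDiff T L y (W ω) (Z ω i) ∂μ = 0 := by
        refine integral_eq_zero_of_ae ?_
        filter_upwards [labelLossDiff_ae_eq_zero_of_measure_eq_zero (L := L) (W := W) (hZ₁ i)
          (hZ₂ i) hT ((measureReal_eq_zero_iff).1 hy)] with ω hω
        simp [hω]
      simp [hy, entry_zero]
    · rw [labelGenError, ← mul_assoc]
      congr 1
      field_simp
  · simp_rw [apply_testSel_sub_apply_trainSel]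
    rw [integral_const_mul, integral_finsetSum]
    · rfl
    intro i _
    have hZi : Measurable fun ω => Z ω i := (measurable_pi_apply i).comp hZ
    exact integrable_selectorSign_mul ((integrable_loss hZi.fst hW hL hL01).sub
      (integrable_loss hZi.snd hW hL hL01)) (hU i)

theorem standard_gen_deltaL_CMI_bound_general [Countable 𝒴] [IsProbabilityMeasure μ] (hn : 0 < n)
    (hZ : Measurable Z) (hW : Measurable W)
    (hZ₁ : ∀ i, HasLaw (fun ω => (Z ω i).1) P μ) (hZ₂ : ∀ i, HasLaw (fun ω => (Z ω i).2) P μ)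
    (hU : ∀ i, HasLaw (fun ω => U ω i) coin μ) (hZU : ∀ i, IndepFun Z (fun ω => U ω i) μ)
    (hT : Measurable T) (hL : Measurable (Function.uncurry L))
    (hL01 : ∀ w z, L w z ∈ Set.Icc (0 : ℝ) 1) :
    ENNReal.ofReal |∫ ω, 1 / n * ∑ i, (L (W ω) (testSel (Z ω i) (U ω i)) -
        L (W ω) (trainSel (Z ω i) (U ω i))) ∂μ| ≤
      ∫⁻ y, ∫⁻ z, ENNReal.ofReal (1 / (n * P.real (T ⁻¹' {y}))) *
        ∑ i, (2 * dCMI μ (fun ω => labelLossDiff T L y (W ω) (Z ω i)) (fun ω => U ω i) Z z) ^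
          (1 / 2 : ℝ) ∂μ.map Z ∂P.map T := by
  have : IsProbabilityMeasure P := (hZ₁ ⟨0, hn⟩).isProbabilityMeasure_iff.1 ‹_›
  rw [← Real.enorm_eq_ofReal_abs, ← (hasSum_mul_labelGenError hZ (fun i => (hU i).aemeasurable) hW
    hZ₁ hZ₂ hT hL hL01).tsum_eq]
  calc ‖∑' y, P.real (T ⁻¹' {y}) * labelGenError μ P T L W Z U y‖ₑ
      ≤ ∑' y, ‖P.real (T ⁻¹' {y}) * labelGenError μ P T L W Z U y‖ₑ := enorm_tsum_le_tsum_enorm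
    _ = ∫⁻ y, ‖labelGenError μ P T L W Z U y‖ₑ ∂P.map T := by
        rw [lintegral_countable']
        refine tsum_congr fun y => ?_
        rw [enorm_mul, Measure.map_apply hT (measurableSet_singleton y),
          Real.enorm_of_nonneg measureReal_nonneg, ofReal_measureReal, mul_comm]
    _ ≤ _ := lintegral_mono fun y => enorm_labelGenError_le hZ hW hU hZU hT hL hL01 y

end LabelDecomposition

/-- **Corollary 2 (label-dependent Δ_YL-CMI bound for the standard generalization error)**:
in the super-sample setting with predictions and a bounded loss `ℓ(f_w(x),y) ∈ [0,1]`,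
the standard expected generalization error satisfies
`|gen| ≤ E_{Y'∼P_Y}[E_{Z_{[2n]}}[(1/n^{Y'}) Σ_i sqrt (2 I_{Z_{[2n]}}(Δ_{Y'}L_i;U_i))]]`. -/
theorem standard_gen_deltaL_CMI_bound
    {Ω 𝒲 𝒳 𝒴 Yhat : Type*}
    [mΩ : MeasurableSpace Ω] [StandardBorelSpace Ω] [Nonempty Ω]
    [MeasurableSpace 𝒲] [StandardBorelSpace 𝒲] [Nonempty 𝒲]
    [MeasurableSpace 𝒳] [StandardBorelSpace 𝒳]
    [MeasurableSpace 𝒴] [Countable 𝒴] [MeasurableSingletonClass 𝒴] [DecidableEq 𝒴]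
    [MeasurableSpace Yhat] [StandardBorelSpace Yhat] [Nonempty Yhat]
    (μ : Measure Ω) [IsProbabilityMeasure μ]
    (n : ℕ) (hn : 0 < n)
    (PZ : Measure (𝒳 × 𝒴)) [IsProbabilityMeasure PZ]
    (Z : Ω → Fin n → (𝒳 × 𝒴) × (𝒳 × 𝒴)) (hZ : Measurable Z)
    (U : Ω → Fin n → Bool) (hU : Measurable U)
    (W : Ω → 𝒲) (hW : Measurable W)
    (hlaw : μ.map (fun ω => (Z ω, U ω)) =
      (Measure.pi fun _ : Fin n => PZ.prod PZ).prod (Measure.pi fun _ : Fin n => coin))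
    (hSle : MeasurableSpace.comap (fun ω (i : Fin n) => trainSel (Z ω i) (U ω i))
        inferInstance ≤ mΩ)
    (hMarkov : CondIndepFun
      (MeasurableSpace.comap (fun ω (i : Fin n) => trainSel (Z ω i) (U ω i)) inferInstance)
      hSle W (fun ω => (Z ω, U ω)) μ)
    (f : 𝒲 → 𝒳 → Yhat) (hf : Measurable fun p : 𝒲 × 𝒳 => f p.1 p.2)
    (ℓ : Yhat → 𝒴 → ℝ) (hℓ : Measurable fun p : Yhat × 𝒴 => ℓ p.1 p.2)
    (hℓ01 : ∀ p y', ℓ p y' ∈ Set.Icc (0 : ℝ) 1) :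
    ENNReal.ofReal
        |∫ ω, (1 / (n : ℝ)) *
            ∑ i, (ℓ (f (W ω) (testSel (Z ω i) (U ω i)).1) (testSel (Z ω i) (U ω i)).2 -
                  ℓ (f (W ω) (trainSel (Z ω i) (U ω i)).1) (trainSel (Z ω i) (U ω i)).2) ∂μ|
      ≤ ∫⁻ y, (∫⁻ z, ENNReal.ofReal (1 / ((n : ℝ) * (PZ (Prod.snd ⁻¹' {y})).toReal)) *
            ∑ i, (2 *
                  dCMI μ
                    (fun ω =>
                      (if (Z ω i).1.2 = y then ℓ (f (W ω) ((Z ω i).1.1)) ((Z ω i).1.2) else 0) -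
                        (if (Z ω i).2.2 = y then ℓ (f (W ω) ((Z ω i).2.1)) ((Z ω i).2.2) else 0))
                    (fun ω => U ω i) Z z) ^ (1 / 2 : ℝ)
            ∂(μ.map Z))
          ∂(PZ.map Prod.snd) := by
  have joint_law : HasLaw (fun ω => (Z ω, U ω))
      ((Measure.pi fun _ => PZ.prod PZ).prod (Measure.pi fun _ => coin)) μ :=
    ⟨(hZ.prodMk hU).aemeasurable, hlaw⟩
  have Z_law : HasLaw Z (Measure.pi fun _ => PZ.prod PZ) μ :=
    measurePreserving_fst.fun_comp_hasLaw joint_law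
  have U_law : HasLaw U (Measure.pi fun _ => coin) μ :=
    measurePreserving_snd.fun_comp_hasLaw joint_law
  have entry_law (i : Fin n) : HasLaw (fun ω => Z ω i) (PZ.prod PZ) μ :=
    (measurePreserving_eval _ i).fun_comp_hasLaw Z_law
  have indep : IndepFun Z U μ := (indepFun_iff_hasLaw_prodMk_prod Z_law U_law).2 joint_law
  have measurable_loss :
      Measurable fun p : 𝒲 × 𝒳 × 𝒴 => ℓ (f p.1 p.2.1) p.2.2 :=
    hℓ.comp ((hf.comp (measurable_fst.prodMk measurable_snd.fst)).prodMk measurable_snd.snd)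
  exact standard_gen_deltaL_CMI_bound_general (T := Prod.snd)
    (L := fun w z => ℓ (f w z.1) z.2) (U := U) hn hZ hW
    (fun i => measurePreserving_fst.fun_comp_hasLaw (entry_law i))
    (fun i => measurePreserving_snd.fun_comp_hasLaw (entry_law i))
    (fun i => (measurePreserving_eval _ i).fun_comp_hasLaw U_law)
    (fun i => indep.comp measurable_id (measurable_pi_apply i))
    measurable_snd measurable_loss fun _ _ => hℓ01 _ _
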